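/- Let d ≥ 1, r ≥ 0 and q be integers with q ≥ 3d, and let b_e, g_e, b_t, g_t be nonnegative integers satisfying: (i) b_e ≥ g_e − d; (ii) b_e + g_e = min(d + 2r + 1, q); (iii) b_t + g_t = d + 2r + 1; and (iv) b_t ≥ b_e · ⌈(d + 2r + 1) / (2(b_e + g_e))⌉. Then b_t ≥ r/4. -/

import Mathlib

/-- Arithmetic core of the bad-tuples lemma.  Let `d ≥ 1`, `r ≥ 0`, and `q` be
integers with `q ≥ 3d`, and let `b_e, g_e, b_t, g_t` be nonnegative integers
satisfying (i) `b_e ≥ g_e − d`, (ii) `b_e + g_e = min(d + 2r + 1, q)`,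
(iii) `b_t + g_t = d + 2r + 1`, and
(iv) `b_t ≥ b_e · ⌈(d + 2r + 1) / (2(b_e + g_e))⌉`.  Then `b_t ≥ r/4`. -/
theorem stmt_10 (d r q be ge bt gt : ℕ) (hd : 1 ≤ d) (hq : 3 * d ≤ q)
    (h1 : (ge : ℤ) - d ≤ be)
    (h2 : be + ge = min (d + 2 * r + 1) q)
    (h3 : bt + gt = d + 2 * r + 1)
    (h4 : (be : ℤ) * ⌈((d : ℚ) + 2 * r + 1) / (2 * (be + ge))⌉ ≤ bt) :
    (r : ℚ) / 4 ≤ bt := by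
  have hn : 0 < be + ge := by omega
  have hnq : (0 : ℚ) < 2 * ((be : ℚ) + ge) := by
    have : (0 : ℚ) < (be : ℚ) + ge := by exact_mod_cast hn
    linarith
  have hc1 : 0 < ⌈((d : ℚ) + 2 * r + 1) / (2 * (be + ge))⌉ := by
    apply Int.ceil_pos.mpr
    positivity
  have hc2 := Int.le_ceil (((d : ℚ) + 2 * r + 1) / (2 * (be + ge)))
  rw [div_le_iff₀ hnq] at hc2
  generalize ⌈((d : ℚ) + 2 * r + 1) / (2 * (be + ge))⌉ = c at *
  have hc3 : (d : ℤ) + 2 * r + 1 ≤ c * (2 * (be + ge)) := by exact_mod_cast hc2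
  have key : (r : ℤ) ≤ 4 * bt := by
    rcases le_total (d + 2 * r + 1) q with h | h
    · rw [min_eq_left h] at h2
      have hb : (r : ℤ) ≤ be := by omega
      nlinarith
    · rw [min_eq_right h] at h2
      have hb : (be : ℤ) + ge ≤ 3 * be := by omega
      have := mul_le_mul_of_nonneg_left hb hc1.le
      nlinarith
  have key2 : (r : ℚ) ≤ 4 * bt := by exact_mod_cast key
  linarith
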